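/- The alternating group A₅ on five letters (the subgroup of even permutations of a five-element type, e.g. alternatingGroup (Fin 5)) has Grossman's Property A: every class-preserving automorphism of A₅ is inner. -/

import Mathlib

/-- A group `G` has Grossman's Property A if every class-preserving automorphism
(i.e. one sending each element to a conjugate of itself) is inner. -/
def HasPropertyA (G : Type*) [Group G] : Prop :=
  ∀ φ : G ≃* G, (∀ g : G, IsConj g (φ g)) → ∃ h : G, ∀ g : G, φ g = h * g * h⁻¹

/-!
Every involution of the alternating group on five points has exactly one fixed point, and two such
involutions commute if and only if they have the same fixed point. The five points can thus be
recovered from the group, so every automorphism permutes them and is conjugation by a permutation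
`σ`. If moreover the automorphism sends some five-cycle `a` to a conjugate of `a` by an even
permutation `c`, then `c⁻¹ * σ` centralizes `a`; the centralizer of a five-cycle consists of its
powers, which are even, hence so is `σ`.
-/

open Equiv MulAction Subgroup
open scoped Pointwise

section GroupAction

variable {G α : Type*} [Group G] [MulAction G α]

theorem eq_of_commute_of_fixedBy_eq_singleton {s t : G} (h : Commute s t) {x y : α}
    (hs : fixedBy α s = {x}) (ht : fixedBy α t = {y}) : x = y := by
  have htx : t • x = x := by
    have := fixedBy_mem_fixedBy_of_commute (α := α) h
    rwa [hs, mem_fixedBy, Set.smul_set_singleton, Set.singleton_eq_singleton_iff] at this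
  rwa [← mem_fixedBy, ht, Set.mem_singleton_iff] at htx

theorem commute_of_fixedBy_eq_singleton [Fintype α] [FaithfulSMul G α]
    (hα : Fintype.card α ≤ 5) {s t : G} (hs : s ^ 2 = 1) (ht : t ^ 2 = 1) {x : α}
    (hsx : fixedBy α s = {x}) (htx : fixedBy α t = {x}) : Commute s t := by
  have hss (y : α) : s • s • y = y := by rw [smul_smul, ← sq, hs, one_smul]
  have htt (y : α) : t • t • y = y := by rw [smul_smul, ← sq, ht, one_smul]
  have hs_fix (y : α) : s • y = y ↔ y = x := Set.ext_iff.1 hsx y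
  have ht_fix (y : α) : t • y = y ↔ y = x := Set.ext_iff.1 htx y
  refine eq_of_smul_eq_smul fun y : α ↦ ?_
  rw [mul_smul, mul_smul]
  by_contra hst
  have hyx : y ≠ x := by grind
  have hsty : s • y ≠ t • y := by grind
  have hnodup : [x, y, s • y, t • y, s • t • y, t • s • y].Nodup := by
    simp only [List.nodup_cons, List.mem_cons, List.not_mem_nil]
    grind (splits := 20)
  have hlength := hnodup.length_le_card
  simp only [List.length_cons, List.length_nil] at hlength
  omega

end GroupAction

theorem mulActionHom_surjective_of_isPretransitive {M N X Y : Type*} [SMul M X] [SMul N Y]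
    [Nonempty X] [IsPretransitive N Y] {φ : M → N} (hφ : Function.Surjective φ) (f : X →ₑ[φ] Y) :
    Function.Surjective f := by
  intro y
  obtain ⟨x⟩ := ‹Nonempty X›
  obtain ⟨n, hn⟩ := exists_smul_eq N (f x) y
  obtain ⟨m, rfl⟩ := hφ n
  exact ⟨m • x, by rw [map_smulₛₗ, hn]⟩

theorem mem_of_isConj_of_centralizer_le {G : Type*} [Group G] {N : Subgroup G} {a b : N}
    (ha : centralizer {(a : G)} ≤ N) (hab : IsConj a b) {g : G} (hg : (b : G) = g * a * g⁻¹) :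
    g ∈ N := by
  obtain ⟨c, rfl⟩ := isConj_iff.1 hab
  have hcg : (c : G)⁻¹ * g ∈ centralizer {(a : G)} := by
    rw [mem_centralizer_singleton_iff]
    rw [coe_mul, coe_mul, coe_inv, eq_mul_inv_iff_mul_eq] at hg
    calc
      (c : G)⁻¹ * g * a = (c : G)⁻¹ * (g * a) := mul_assoc _ _ _
      _ = a * ((c : G)⁻¹ * g) := by rw [← hg]; group
  exact (N.mul_mem_cancel_left (N.inv_mem c.2)).1 (ha hcg)

section Perm

variable {α : Type*} [Fintype α] [DecidableEq α]

theorem centralizer_le_alternatingGroup_of_orderOf_eq_card {a : Perm α}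
    (hprime : (Fintype.card α).Prime) (hodd : Odd (Fintype.card α))
    (ha : orderOf a = Fintype.card α) : centralizer {a} ≤ alternatingGroup α := by
  have hcycle : a.IsCycle := Perm.isCycle_of_prime_order'' hprime ha
  have htype : a.cycleType = {Fintype.card α} := by
    rw [hcycle.cycleType, ← hcycle.orderOf, ha]
  rw [Perm.centralizer_le_alternating_iff, htype]
  refine ⟨by simpa using hodd, by simp, fun i ↦ ?_⟩
  exact Multiset.nodup_iff_count_le_one.1 (Multiset.nodup_singleton _) i

theorem exists_fixedBy_eq_singleton_of_orderOf_eq_two (hα : Fintype.card α = 5)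
    {t : alternatingGroup α} (ht : orderOf t = 2) : ∃ x, fixedBy α t = {x} := by
  have ht' : orderOf (t : Perm α) = 2 := by rw [orderOf_coe, ht]
  obtain ⟨n, hn⟩ := Perm.cycleType_prime_order (ht' ▸ Nat.prime_two)
  rw [ht'] at hn
  have hle : n ≤ 1 := by
    have hsum := (t : Perm α).sum_cycleType_le
    rw [hn, hα, Multiset.sum_replicate, smul_eq_mul] at hsum
    omega
  have hn0 : n ≠ 0 := by
    rintro rfl
    have hsign := Perm.mem_alternatingGroup.1 t.2
    rw [Perm.sign_of_cycleType, hn] at hsign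
    exact absurd hsign (by decide)
  obtain rfl : n = 1 := by omega
  have hcard : Fintype.card (Function.fixedPoints (t : Perm α)) = 1 := by
    rw [Perm.card_fixedPoints, hα, hn, Multiset.sum_replicate]
    rfl
  rw [← Nat.card_eq_fintype_card, Nat.card_coe_set_eq] at hcard
  exact Set.ncard_eq_one.1 hcard

theorem exists_orderOf_eq_two_and_fixedBy_eq_singleton (hα : Fintype.card α = 5) (x : α) :
    ∃ t : alternatingGroup α, orderOf t = 2 ∧ fixedBy α t = {x} := by
  have : Nontrivial α := Fintype.one_lt_card_iff_nontrivial.1 (by omega)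
  have : IsPretransitive (alternatingGroup α) α :=
    alternatingGroup.isPretransitive_of_three_le_card α (by simp [hα])
  obtain ⟨t, ht⟩ := exists_prime_orderOf_dvd_card (G := alternatingGroup α) 2 (by
    rw [card_alternatingGroup, hα]; decide)
  obtain ⟨y, hy⟩ := exists_fixedBy_eq_singleton_of_orderOf_eq_two hα ht
  obtain ⟨g, rfl⟩ := exists_smul_eq (alternatingGroup α) y x
  refine ⟨g * t * g⁻¹, ?_, by rw [← smul_fixedBy, hy, Set.smul_set_singleton]⟩
  rw [← MulAut.conj_apply, MulEquiv.orderOf_eq, ht]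

theorem nonempty_mulActionHom_of_mulAut_alternatingGroup (hα : Fintype.card α = 5)
    (φ : MulAut (alternatingGroup α)) : Nonempty (α →ₑ[φ] α) := by
  choose t ht htx using exists_orderOf_eq_two_and_fixedBy_eq_singleton hα
  have hφt (x : α) : orderOf (φ (t x)) = 2 := by rw [MulEquiv.orderOf_eq, ht]
  choose f hf using fun x ↦ exists_fixedBy_eq_singleton_of_orderOf_eq_two hα (hφt x)
  refine ⟨⟨f, fun g x ↦ ?_⟩⟩
  have hcomm : Commute (t (g • x)) (g * t x * g⁻¹) := by
    refine commute_of_fixedBy_eq_singleton hα.le ?_ ?_ (htx (g • x)) ?_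
    · rw [← ht, pow_orderOf_eq_one]
    · rw [conj_pow, ← ht x, pow_orderOf_eq_one, mul_one, mul_inv_cancel]
    · rw [← smul_fixedBy, htx, Set.smul_set_singleton]
  refine eq_of_commute_of_fixedBy_eq_singleton (hcomm.map φ) (hf _) ?_
  rw [map_mul, map_mul, map_inv, ← smul_fixedBy, hf, Set.smul_set_singleton]

theorem conjNormal_alternatingGroup_surjective (hα : Fintype.card α = 5) :
    Function.Surjective (MulAut.conjNormal : Perm α →* MulAut (alternatingGroup α)) := by
  intro φ
  have : Nonempty α := Fintype.card_pos_iff.1 (by omega)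
  have : IsPretransitive (alternatingGroup α) α :=
    alternatingGroup.isPretransitive_of_three_le_card α (by simp [hα])
  obtain ⟨f⟩ := nonempty_mulActionHom_of_mulAut_alternatingGroup hα φ
  have hf : Function.Bijective f :=
    (mulActionHom_surjective_of_isPretransitive φ.surjective f).bijective_of_finite
  refine ⟨Equiv.ofBijective f hf, MulEquiv.ext fun g ↦ Subtype.ext ?_⟩
  rw [MulAut.conjNormal_apply, mul_inv_eq_iff_eq_mul]
  ext x
  exact map_smulₛₗ f g x

theorem alternatingGroupFive_propertyA_general (hα : Fintype.card α = 5)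
    (φ : MulAut (alternatingGroup α)) {a : alternatingGroup α} (ha : orderOf a = 5)
    (hφ : IsConj a (φ a)) : ∃ h, ∀ g, φ g = h * g * h⁻¹ := by
  obtain ⟨σ, rfl⟩ := conjNormal_alternatingGroup_surjective hα φ
  have hcent : centralizer {(a : Perm α)} ≤ alternatingGroup α :=
    centralizer_le_alternatingGroup_of_orderOf_eq_card (hα ▸ Nat.prime_five) (hα ▸ by decide)
      (by rw [orderOf_coe, ha, hα])
  have hσ : σ ∈ alternatingGroup α :=
    mem_of_isConj_of_centralizer_le hcent hφ (MulAut.conjNormal_apply σ a)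
  exact ⟨⟨σ, hσ⟩, fun g ↦ Subtype.ext (MulAut.conjNormal_apply σ g)⟩

end Perm

theorem alternatingGroupFive_propertyA : HasPropertyA ↥(alternatingGroup (Fin 5)) := by
  intro φ hφ
  have : Fact (Nat.Prime 5) := ⟨Nat.prime_five⟩
  obtain ⟨a, ha⟩ := exists_prime_orderOf_dvd_card (G := alternatingGroup (Fin 5)) 5 (by
    rw [card_alternatingGroup, Fintype.card_fin]; decide)
  exact alternatingGroupFive_propertyA_general (Fintype.card_fin 5) φ ha (hφ a)
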